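/- Let f : ℝ² → ℝ be of class C² satisfying (i) D²f(p)(q,q) > 0 for all p, q ∈ ℝ² with q ≠ 0, and (ii) there is a constant λ > 0 with D²f(p)(q,q) ≤ λ · (ln(2+|p|)/(1+|p|)) · |q|² for all p, q ∈ ℝ². Let u ∈ C²(ℝ²) solve div[Df(∇u)] = 0 on ℝ², and suppose there are constants 0 ≤ m < 1, K > 0 with |∂₁u(x)| ≤ K(|∂₂u(x)|^m + 1) for all x ∈ ℝ². Then for every exponent α > −1/2 with 2m(1+α) − 1 < 0 one has ∫_{ℝ²} D²f(∇u)(∇∂₁u, ∇∂₁u) · (1+|∂₁u|²)^α dx < ∞. -/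

import Mathlib

open Real MeasureTheory Metric
open scoped ENNReal

noncomputable section

/-- `ℝ²` with its Euclidean structure. -/
abbrev E2 : Type := EuclideanSpace ℝ (Fin 2)

/-- The `i`-th standard basis vector of `ℝ²`. -/
def ee (i : Fin 2) : E2 := EuclideanSpace.single i 1

/-- The Hessian bilinear form `D²f(p)(q,q)`. -/
def Hess (f : E2 → ℝ) (p q : E2) : ℝ := iteratedFDeriv ℝ 2 f p ![q, q]

/-- The partial derivative `∂ᵢu(x)`. -/
def pd (u : E2 → ℝ) (i : Fin 2) (x : E2) : ℝ := fderiv ℝ u x (ee i)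

/-- The equation `div [Df(∇u)] = 0`, i.e. `∑ i, ∂ᵢ[(∂f/∂pᵢ)(∇u(x))] = 0` on `ℝ²`. -/
def solves (f u : E2 → ℝ) : Prop :=
  ∀ x : E2, ∑ i : Fin 2, fderiv ℝ (fun y => fderiv ℝ f (gradient u y) (ee i)) x (ee i) = 0

/-!
Let `g = ∂ₑu` be a directional derivative of the solution. Differentiating `div (∇f ∘ ∇u) = 0` in
the direction `e` shows that `g` solves, weakly, the linear equation `div (A ∇g) = 0` with the
degenerate elliptic matrix `A = D²f(∇u)`. Testing it with `η² H(g)` gives a Caccioppoli inequality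

  `∫ η² H'(g) ⟪A ∇g, ∇g⟫ ≤ 4 ∫ (H(g)² / H'(g)) ⟪A ∇η, ∇η⟫`.

For `H(t) = t (1 + t²) ^ (β - 1)` with `β > 1/2` the weight `H² / H'` is at most a multiple of
`(1 + t²) ^ β`, so `|g| ≤ K (|∇u| ^ m + 1)` lets it grow at most like `|∇u| ^ (2mβ)`. If `2mβ < 1`,
this is compensated by the decay `log (2 + |∇u|) / (1 + |∇u|)` of `A`, and the right-hand side is
bounded by a multiple of `∫ |∇η|²`; both conditions on `β` hold for `β = 1 / (1 + m)`. In dimension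
at most two there are cutoffs, equal to `1` on arbitrarily large balls, whose energy `∫ |∇η|²` is
arbitrarily small. Hence `⟪A ∇g, ∇g⟫` vanishes identically, and so does the integrand.
-/

open Module
open scoped Gradient RealInnerProductSpace

section Divergence

variable {E : Type*} [NormedAddCommGroup E] [NormedSpace ℝ E]

/-- The divergence of a vector field, written as the trace of its derivative so that no basis has
to be chosen. -/
def divergence (V : E → E) (x : E) : ℝ := LinearMap.trace ℝ E (fderiv ℝ V x)

lemma divergence_eq_sum_coord {ι : Type*} [Fintype ι] (b : Basis ι ℝ E) (V : E → E) (x : E) :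
    divergence V x = ∑ i, b.coord i (fderiv ℝ V x (b i)) := by
  classical
  simp [divergence, LinearMap.trace_eq_matrix_trace ℝ b, Matrix.trace, LinearMap.toMatrix_apply]

variable [MeasurableSpace E]

/-- A vector field is divergence free in the sense of distributions. Test functions are only
required to be `C¹`, because the ones built from a `C²` solution are no better. -/
def IsWeaklyDivergenceFree (μ : Measure E) (V : E → E) : Prop :=
  ∀ φ : E → ℝ, ContDiff ℝ 1 φ → HasCompactSupport φ → ∫ x, fderiv ℝ φ x (V x) ∂μ = 0

variable [BorelSpace E] {μ : Measure E}

lemma hasDerivAt_integral_clm_apply_translate {F : Type*} [NormedAddCommGroup F]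
    [NormedSpace ℝ F] [IsFiniteMeasureOnCompacts μ] {L : E → F →L[ℝ] ℝ} (hL : Continuous L)
    (hLc : HasCompactSupport L) {V : E → F} (hV : ContDiff ℝ 1 V) (v : E) :
    HasDerivAt (fun t : ℝ => ∫ x, L x (V (x + t • v)) ∂μ) (∫ x, L x (fderiv ℝ V x v) ∂μ) 0 := by
  have hV' : Continuous fun q : ℝ × E => L q.2 (fderiv ℝ V (q.2 + q.1 • v) v) :=
    (hL.comp continuous_snd).clm_apply
      (((hV.continuous_fderiv one_ne_zero).comp (by fun_prop)).clm_apply continuous_const)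
  obtain ⟨M, hM⟩ := ((isCompact_closedBall (0 : ℝ) 1).prod hLc).exists_bound_of_continuousOn
    hV'.continuousOn
  have hcont (t : ℝ) : Continuous fun x => L x (V (x + t • v)) :=
    hL.clm_apply (hV.continuous.comp (by fun_prop))
  have hsupp (t : ℝ) : HasCompactSupport fun x => L x (V (x + t • v)) :=
    hLc.mono fun x hx h => hx (by simp [h])
  have hderiv (x : E) (t : ℝ) :
      HasDerivAt (fun t : ℝ => L x (V (x + t • v))) (L x (fderiv ℝ V (x + t • v) v)) t := by
    have hline : HasDerivAt (fun t : ℝ => x + t • v) v t := by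
      simpa using ((hasDerivAt_id t).smul_const v).const_add x
    exact (L x).hasFDerivAt.comp_hasDerivAt t
      ((hV.differentiable one_ne_zero _).hasFDerivAt.comp_hasDerivAt t hline)
  have hbound (x : E) (t : ℝ) (ht : t ∈ closedBall 0 1) :
      ‖L x (fderiv ℝ V (x + t • v) v)‖ ≤ (tsupport L).indicator (fun _ => M) x := by
    by_cases hx : x ∈ tsupport L
    · simpa [hx] using hM (t, x) ⟨ht, hx⟩
    · simp [hx, image_eq_zero_of_notMem_tsupport hx]
  have key := hasDerivAt_integral_of_dominated_loc_of_deriv_le (μ := μ) (x₀ := (0 : ℝ))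
    (closedBall_mem_nhds _ one_pos) (.of_forall fun t => (hcont t).aestronglyMeasurable)
    ((hcont 0).integrable_of_hasCompactSupport (hsupp 0))
    (hV'.comp (by fun_prop : Continuous fun x : E => ((0 : ℝ), x))).aestronglyMeasurable
    (.of_forall hbound)
    ((integrable_indicator_iff hLc.isCompact.isClosed.measurableSet).2
      (integrableOn_const hLc.isCompact.measure_lt_top.ne))
    (.of_forall fun x t _ => hderiv x t)
  simpa using key.2

lemma IsWeaklyDivergenceFree.comp_add_right [μ.IsAddRightInvariant] {V : E → E}
    (hV : IsWeaklyDivergenceFree μ V) (v : E) :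
    IsWeaklyDivergenceFree μ fun x => V (x + v) := by
  intro φ hφ hφc
  have hshift := hV (fun x => φ (x - v)) (hφ.comp (contDiff_id.sub contDiff_const))
    (hφc.comp_homeomorph (Homeomorph.subRight v))
  simpa [fderiv_comp_sub] using
    (integral_add_right_eq_self (fun x => fderiv ℝ φ (x - v) (V x)) v).trans
      (by simpa only [fderiv_comp_sub] using hshift)

lemma IsWeaklyDivergenceFree.fderiv_apply [IsFiniteMeasureOnCompacts μ]
    [μ.IsAddRightInvariant] {V : E → E} (hV : ContDiff ℝ 1 V)
    (hdiv : IsWeaklyDivergenceFree μ V) (v : E) :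
    IsWeaklyDivergenceFree μ fun x => fderiv ℝ V x v := by
  intro φ hφ hφc
  have hconst : (fun t : ℝ => ∫ x, fderiv ℝ φ x (V (x + t • v)) ∂μ) = fun _ => 0 :=
    funext fun t => hdiv.comp_add_right (t • v) φ hφ hφc
  have hderiv := hasDerivAt_integral_clm_apply_translate (μ := μ)
    (hφ.continuous_fderiv one_ne_zero) (hφc.fderiv ℝ) hV v
  rw [hconst] at hderiv
  exact hderiv.unique (hasDerivAt_const 0 0)

variable [FiniteDimensional ℝ E] [μ.IsAddHaarMeasure]

lemma integral_fderiv_apply_eq_neg_integral_divergence_mul {V : E → E} (hV : ContDiff ℝ 1 V)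
    {φ : E → ℝ} (hφ : ContDiff ℝ 1 φ) (hφc : HasCompactSupport φ) :
    ∫ x, fderiv ℝ φ x (V x) ∂μ = -∫ x, divergence V x * φ x ∂μ := by
  let b := finBasis ℝ E
  let coord i : E →L[ℝ] ℝ := LinearMap.toContinuousLinearMap (b.coord i)
  have hcoord i : ContDiff ℝ 1 fun x => coord i (V x) := (coord i).contDiff.comp hV
  have hcoord' i x : fderiv ℝ (fun y => coord i (V y)) x (b i) = coord i (fderiv ℝ V x (b i)) := by
    have h : HasFDerivAt (fun y => coord i (V y)) (coord i ∘L fderiv ℝ V x) x :=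
      (coord i).hasFDerivAt.comp x (hV.differentiable one_ne_zero x).hasFDerivAt
    rw [h.fderiv, ContinuousLinearMap.comp_apply]
  have hpairing x : fderiv ℝ φ x (V x) = ∑ i, coord i (V x) * fderiv ℝ φ x (b i) := by
    conv_lhs => rw [← b.sum_repr (V x), map_sum]
    simp [coord]
  have hdivergence x : divergence V x * φ x =
      ∑ i, fderiv ℝ (fun y => coord i (V y)) x (b i) * φ x := by
    simp only [hcoord', divergence_eq_sum_coord b, Finset.sum_mul]
    rfl
  have hint i : Integrable (fun x => fderiv ℝ (fun y => coord i (V y)) x (b i) * φ x) μ :=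
    ((((hcoord i).continuous_fderiv one_ne_zero).clm_apply continuous_const).mul
      hφ.continuous).integrable_of_hasCompactSupport hφc.mul_left
  have hint' i : Integrable (fun x => coord i (V x) * fderiv ℝ φ x (b i)) μ :=
    ((hcoord i).continuous.mul ((hφ.continuous_fderiv one_ne_zero).clm_apply
      continuous_const)).integrable_of_hasCompactSupport (hφc.fderiv_apply ℝ (b i)).mul_left
  have hparts i : ∫ x, coord i (V x) * fderiv ℝ φ x (b i) ∂μ =
      -∫ x, fderiv ℝ (fun y => coord i (V y)) x (b i) * φ x ∂μ :=
    integral_mul_fderiv_eq_neg_fderiv_mul_of_integrable (hint i) (hint' i)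
      (((hcoord i).continuous.mul hφ.continuous).integrable_of_hasCompactSupport hφc.mul_left)
      (fun x _ => (hcoord i).differentiable one_ne_zero x)
      (fun x _ => hφ.differentiable one_ne_zero x)
  simp only [hpairing, hdivergence]
  rw [integral_finsetSum _ fun i _ => hint' i, integral_finsetSum _ fun i _ => hint i,
    ← Finset.sum_neg_distrib]
  exact Finset.sum_congr rfl fun i _ => hparts i

lemma isWeaklyDivergenceFree_of_divergence_eq_zero {V : E → E} (hV : ContDiff ℝ 1 V)
    (hdiv : ∀ x, divergence V x = 0) : IsWeaklyDivergenceFree μ V := fun φ hφ hφc => by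
  simp [integral_fderiv_apply_eq_neg_integral_divergence_mul hV hφ hφc, hdiv]

end Divergence

section Cutoff

variable {E : Type*} [NormedAddCommGroup E] [NormedSpace ℝ E]

lemma integrable_norm_fderiv_sq [MeasurableSpace E] [BorelSpace E] {μ : Measure E}
    [IsFiniteMeasureOnCompacts μ] {η : E → ℝ} (hη : ContDiff ℝ 1 η) (hηc : HasCompactSupport η) :
    Integrable (fun x => ‖fderiv ℝ η x‖ ^ 2) μ :=
  ((hη.continuous_fderiv one_ne_zero).norm.pow 2).integrable_of_hasCompactSupport
    ((hηc.fderiv ℝ).mono fun x hx h => hx (by simp [h]))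

variable [FiniteDimensional ℝ E]

/-- A smooth cutoff that is `1` on the ball of radius `r` and `0` outside the ball of radius `2r`.
All of them are dilations of one bump, so that their Dirichlet energies are comparable. -/
def dilatedBump (r : ℝ) (x : E) : ℝ :=
  (⟨1, 2, one_pos, one_lt_two⟩ : ContDiffBump (0 : E)) (r⁻¹ • x)

lemma contDiff_dilatedBump (r : ℝ) : ContDiff ℝ 1 (dilatedBump r : E → ℝ) :=
  (ContDiffBump.contDiff _).comp (contDiff_const_smul _)

lemma hasCompactSupport_dilatedBump {r : ℝ} (hr : r ≠ 0) :
    HasCompactSupport (dilatedBump r : E → ℝ) :=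
  (ContDiffBump.hasCompactSupport _).comp_smul (inv_ne_zero hr)

lemma dilatedBump_eq_one {r : ℝ} (hr : 0 < r) {x : E} (hx : ‖x‖ ≤ r) : dilatedBump r x = 1 := by
  apply ContDiffBump.one_of_mem_closedBall
  simpa [norm_smul, abs_of_pos hr, inv_mul_le_iff₀ hr] using hx

lemma dilatedBump_eq_zero {r : ℝ} (hr : 0 < r) {x : E} (hx : 2 * r ≤ ‖x‖) :
    dilatedBump r x = 0 := by
  apply ContDiffBump.zero_of_le_dist
  simpa [norm_smul, abs_of_pos hr, le_inv_mul_iff₀ hr, mul_comm r] using hx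

lemma fderiv_dilatedBump_eq_zero {r : ℝ} (hr : 0 < r) {x : E} (hx : ‖x‖ ≤ r ∨ 2 * r ≤ ‖x‖) :
    fderiv ℝ (dilatedBump r) x = 0 := by
  rcases hx with hx | hx
  · refine IsLocalMax.fderiv_eq_zero (.of_forall fun y => ?_)
    exact (ContDiffBump.le_one _).trans_eq (dilatedBump_eq_one hr hx).symm
  · refine IsLocalMin.fderiv_eq_zero (.of_forall fun y => ?_)
    exact (dilatedBump_eq_zero hr hx).trans_le (ContDiffBump.nonneg _)

lemma norm_sum_sq_eq_sum_norm_sq_of_pairwise {ι F : Type*} [SeminormedAddCommGroup F]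
    (s : Finset ι) {a : ι → F} (ha : Pairwise fun i j => a i = 0 ∨ a j = 0) :
    ‖∑ i ∈ s, a i‖ ^ 2 = ∑ i ∈ s, ‖a i‖ ^ 2 := by
  by_cases h : ∃ i ∈ s, a i ≠ 0
  · obtain ⟨i, hi, hai⟩ := h
    have hzero j (hji : j ≠ i) : a j = 0 := (ha hji).resolve_right hai
    rw [Finset.sum_eq_single_of_mem i hi fun j _ => hzero j,
      Finset.sum_eq_single_of_mem i hi fun j _ hji => by simp [hzero j hji]]
  · push Not at h
    rw [Finset.sum_eq_zero h, Finset.sum_eq_zero fun i hi => by simp [h i hi]]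
    simp

/-- The mean of the cutoffs at the `N` consecutive dyadic scales starting from `2 ^ n`, an
elementary substitute for the logarithmic cutoff of the plane. -/
def dyadicCutoff (n N : ℕ) (x : E) : ℝ :=
  (N : ℝ)⁻¹ * ∑ k ∈ Finset.range N, dilatedBump (2 ^ (n + k)) x

lemma contDiff_dyadicCutoff (n N : ℕ) : ContDiff ℝ 1 (dyadicCutoff n N : E → ℝ) :=
  contDiff_const.mul (ContDiff.sum fun _ _ => contDiff_dilatedBump _)

lemma hasCompactSupport_dyadicCutoff (n N : ℕ) :
    HasCompactSupport (dyadicCutoff n N : E → ℝ) := by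
  refine HasCompactSupport.intro (isCompact_closedBall 0 (2 * 2 ^ (n + N))) fun x hx => ?_
  have hzero k (hk : k ∈ Finset.range N) : dilatedBump (2 ^ (n + k)) x = 0 := by
    have hscale : (2 : ℝ) ^ (n + k) ≤ 2 ^ (n + N) :=
      pow_le_pow_right₀ one_le_two (by have := Finset.mem_range.1 hk; lia)
    refine dilatedBump_eq_zero (by positivity) ?_
    simp only [mem_closedBall_zero_iff, not_le] at hx
    linarith
  rw [dyadicCutoff, Finset.sum_eq_zero hzero, mul_zero]

lemma dyadicCutoff_eq_one (n : ℕ) {N : ℕ} (hN : N ≠ 0) {x : E} (hx : ‖x‖ ≤ 2 ^ n) :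
    dyadicCutoff n N x = 1 := by
  have hone k : dilatedBump (2 ^ (n + k)) x = 1 :=
    dilatedBump_eq_one (by positivity)
      (hx.trans (pow_le_pow_right₀ one_le_two (Nat.le_add_right n k)))
  simp [dyadicCutoff, hone, hN]

lemma pairwise_fderiv_dilatedBump_two_pow_eq_zero (n : ℕ) (x : E) :
    Pairwise fun j k => fderiv ℝ (dilatedBump (2 ^ (n + j))) x = 0 ∨
      fderiv ℝ (dilatedBump (2 ^ (n + k))) x = 0 := by
  have hlt {j k : ℕ} (hjk : j < k) : fderiv ℝ (dilatedBump (2 ^ (n + j))) x = 0 ∨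
      fderiv ℝ (dilatedBump (2 ^ (n + k))) x = 0 := by
    have hscale : (2 : ℝ) * 2 ^ (n + j) ≤ 2 ^ (n + k) := by
      rw [← pow_succ']
      exact pow_le_pow_right₀ one_le_two (by lia)
    rcases le_total ‖x‖ (2 ^ (n + k)) with hx | hx
    · exact .inr (fderiv_dilatedBump_eq_zero (by positivity) (.inl hx))
    · exact .inl (fderiv_dilatedBump_eq_zero (by positivity) (.inr (hscale.trans hx)))
  exact fun j k hjk => hjk.lt_or_gt.elim hlt fun h => (hlt h).symm

lemma norm_fderiv_dyadicCutoff_sq (n N : ℕ) (x : E) :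
    ‖fderiv ℝ (dyadicCutoff n N) x‖ ^ 2 =
      (N : ℝ)⁻¹ ^ 2 * ∑ k ∈ Finset.range N, ‖fderiv ℝ (dilatedBump (2 ^ (n + k))) x‖ ^ 2 := by
  have hsum : fderiv ℝ (dyadicCutoff n N) x =
      (N : ℝ)⁻¹ • ∑ k ∈ Finset.range N, fderiv ℝ (dilatedBump (2 ^ (n + k))) x :=
    ((HasFDerivAt.fun_sum fun k _ =>
      ((contDiff_dilatedBump (2 ^ (n + k))).differentiable one_ne_zero x).hasFDerivAt).const_mul
        (N : ℝ)⁻¹).fderiv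
  rw [hsum, norm_smul, mul_pow, norm_sum_sq_eq_sum_norm_sq_of_pairwise _
    (pairwise_fderiv_dilatedBump_two_pow_eq_zero n x)]
  simp

variable [MeasurableSpace E] [BorelSpace E] {μ : Measure E} [μ.IsAddHaarMeasure]

lemma integral_norm_fderiv_dilatedBump_sq {r : ℝ} (hr : 0 < r) :
    ∫ x, ‖fderiv ℝ (dilatedBump r : E → ℝ) x‖ ^ 2 ∂μ =
      r ^ finrank ℝ E / r ^ 2 * ∫ x, ‖fderiv ℝ (dilatedBump 1 : E → ℝ) x‖ ^ 2 ∂μ := by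
  have hfderiv (x : E) : fderiv ℝ (dilatedBump r) x =
      r⁻¹ • fderiv ℝ (dilatedBump 1 : E → ℝ) (r⁻¹ • x) := by
    rw [← fderiv_comp_smul]
    congr 1
    ext y
    simp [dilatedBump]
  simp_rw [hfderiv, norm_smul, mul_pow]
  rw [integral_const_mul,
    Measure.integral_comp_inv_smul μ (fun y : E => ‖fderiv ℝ (dilatedBump 1 : E → ℝ) y‖ ^ 2) r]
  simp only [norm_inv, norm_eq_abs, abs_of_pos hr, inv_pow, abs_pow, smul_eq_mul, div_eq_mul_inv]
  ring

lemma integral_norm_fderiv_dilatedBump_sq_le (hE : finrank ℝ E ≤ 2) {r : ℝ} (hr : 1 ≤ r) :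
    ∫ x, ‖fderiv ℝ (dilatedBump r : E → ℝ) x‖ ^ 2 ∂μ ≤
      ∫ x, ‖fderiv ℝ (dilatedBump 1 : E → ℝ) x‖ ^ 2 ∂μ := by
  rw [integral_norm_fderiv_dilatedBump_sq (one_pos.trans_le hr)]
  exact mul_le_of_le_one_left (integral_nonneg fun x => by positivity)
    (div_le_one_of_le₀ (pow_le_pow_right₀ hr hE) (by positivity))

-- The gradients of the `N` bumps live on disjoint annuli, so the energy of the mean is `N / N²`.
lemma integral_norm_fderiv_dyadicCutoff_sq_le (hE : finrank ℝ E ≤ 2) (n N : ℕ) :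
    ∫ x, ‖fderiv ℝ (dyadicCutoff n N : E → ℝ) x‖ ^ 2 ∂μ ≤
      (∫ x, ‖fderiv ℝ (dilatedBump 1 : E → ℝ) x‖ ^ 2 ∂μ) / N := by
  simp only [norm_fderiv_dyadicCutoff_sq]
  rw [integral_const_mul, integral_finsetSum _ fun k _ =>
    integrable_norm_fderiv_sq (contDiff_dilatedBump _) (hasCompactSupport_dilatedBump (by simp))]
  calc (N : ℝ)⁻¹ ^ 2 * ∑ k ∈ Finset.range N,
        ∫ x, ‖fderiv ℝ (dilatedBump (2 ^ (n + k)) : E → ℝ) x‖ ^ 2 ∂μ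
      ≤ (N : ℝ)⁻¹ ^ 2 * ∑ k ∈ Finset.range N,
        ∫ x, ‖fderiv ℝ (dilatedBump 1 : E → ℝ) x‖ ^ 2 ∂μ := by
        gcongr (N : ℝ)⁻¹ ^ 2 * ∑ k ∈ Finset.range N, ?_
        exact integral_norm_fderiv_dilatedBump_sq_le hE (one_le_pow₀ one_le_two)
    _ = (∫ x, ‖fderiv ℝ (dilatedBump 1 : E → ℝ) x‖ ^ 2 ∂μ) / N := by
        rw [Finset.sum_const, Finset.card_range, nsmul_eq_mul]
        field_simp

lemma exists_cutoff_integral_norm_fderiv_sq_le (hE : finrank ℝ E ≤ 2) (R : ℝ) {ε : ℝ}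
    (hε : 0 < ε) :
    ∃ η : E → ℝ, ContDiff ℝ 1 η ∧ HasCompactSupport η ∧ (∀ x ∈ ball (0 : E) R, η x = 1) ∧
      ∫ x, ‖fderiv ℝ η x‖ ^ 2 ∂μ ≤ ε := by
  obtain ⟨n, hn⟩ := pow_unbounded_of_one_lt R one_lt_two
  obtain ⟨N, hN⟩ := exists_nat_gt ((∫ x, ‖fderiv ℝ (dilatedBump 1 : E → ℝ) x‖ ^ 2 ∂μ) / ε)
  have hN0 : (0 : ℝ) < N := lt_of_le_of_lt (by positivity) hN
  refine ⟨dyadicCutoff n N, contDiff_dyadicCutoff n N, hasCompactSupport_dyadicCutoff n N,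
    fun x hx => dyadicCutoff_eq_one n (Nat.cast_pos.1 hN0).ne'
      ((mem_ball_zero_iff.1 hx).trans hn).le, ?_⟩
  exact (integral_norm_fderiv_dyadicCutoff_sq_le (μ := μ) hE n N).trans
    ((div_le_comm₀ hN0 hε).2 hN.le)

lemma eq_zero_of_forall_integral_sq_mul_le_dirichlet (hE : finrank ℝ E ≤ 2) {Q : E → ℝ}
    (hQ : Continuous Q) (hQ0 : ∀ x, 0 ≤ Q x) {C : ℝ} (hC : 0 ≤ C)
    (hbound : ∀ η : E → ℝ, ContDiff ℝ 1 η → HasCompactSupport η →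
      ∫ x, η x ^ 2 * Q x ∂μ ≤ C * ∫ x, ‖fderiv ℝ η x‖ ^ 2 ∂μ) (x : E) : Q x = 0 := by
  have hball (R : ℝ) : ∫ x in ball 0 R, Q x ∂μ = 0 := by
    refine le_antisymm (le_of_forall_pos_le_add fun δ hδ => ?_) (integral_nonneg hQ0)
    obtain ⟨η, hη, hηc, hη1, hηε⟩ := exists_cutoff_integral_norm_fderiv_sq_le (μ := μ) hE R
      (div_pos hδ (by positivity : 0 < C + 1))
    have hint : Integrable (fun x => η x ^ 2 * Q x) μ :=
      ((hη.continuous.pow 2).mul hQ).integrable_of_hasCompactSupport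
        (hηc.mono fun x hx h => hx (by simp [h]))
    calc ∫ x in ball 0 R, Q x ∂μ = ∫ x in ball 0 R, η x ^ 2 * Q x ∂μ :=
          setIntegral_congr_fun measurableSet_ball fun x hx => by simp [hη1 x hx]
      _ ≤ ∫ x, η x ^ 2 * Q x ∂μ :=
          setIntegral_le_integral hint (.of_forall fun x => mul_nonneg (sq_nonneg _) (hQ0 x))
      _ ≤ C * (δ / (C + 1)) := (hbound η hη hηc).trans (by gcongr)
      _ ≤ 0 + δ := by
          rw [zero_add, mul_div_left_comm]
          exact mul_le_of_le_one_right hδ.le (div_le_one_of_le₀ (by linarith) (by linarith))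
  have hae : Q =ᵐ[μ.restrict (ball 0 (‖x‖ + 1))] 0 :=
    (setIntegral_eq_zero_iff_of_nonneg_ae (.of_forall hQ0)
      ((hQ.continuousOn.integrableOn_compact (isCompact_closedBall 0 _)).mono_set
        ball_subset_closedBall)).1 (hball _)
  exact Measure.eqOn_open_of_ae_eq hae isOpen_ball hQ.continuousOn continuousOn_const
    (by simp : x ∈ ball (0 : E) (‖x‖ + 1))

end Cutoff

section Caccioppoli

variable {E : Type*} [NormedAddCommGroup E] [InnerProductSpace ℝ E]

lemma neg_two_mul_inner_le_of_isPositive {T : E →L[ℝ] E} (hT : T.IsPositive) {s : ℝ}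
    (hs : 0 < s) (v w : E) : -(2 * ⟪T v, w⟫) ≤ s * ⟪T v, v⟫ + s⁻¹ * ⟪T w, w⟫ := by
  have hsymm : ⟪T w, v⟫ = ⟪T v, w⟫ := by
    rw [hT.inner_left_eq_inner_right, real_inner_comm]
  have hsq : 0 ≤ ⟪T (s • v + w), s • v + w⟫ := hT.inner_nonneg_left _
  simp only [map_add, map_smul, inner_add_left, inner_add_right, real_inner_smul_left,
    real_inner_smul_right, hsymm] at hsq
  have hsq' : 0 ≤ s⁻¹ * (s * (s * ⟪T v, v⟫) + 2 * (s * ⟪T v, w⟫) + ⟪T w, w⟫) :=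
    mul_nonneg (inv_nonneg.2 hs.le) (by linarith)
  have hexpand : s⁻¹ * (s * (s * ⟪T v, v⟫) + 2 * (s * ⟪T v, w⟫) + ⟪T w, w⟫) =
      s * ⟪T v, v⟫ + 2 * ⟪T v, w⟫ + s⁻¹ * ⟪T w, w⟫ := by
    field_simp
  linarith

variable [CompleteSpace E]

lemma norm_gradient (u : E → ℝ) (x : E) : ‖∇ u x‖ = ‖fderiv ℝ u x‖ := by
  rw [← toDual_gradient, LinearIsometryEquiv.norm_map]

lemma contDiff_gradient {n : WithTop ℕ∞} {u : E → ℝ} (hu : ContDiff ℝ (n + 1) u) :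
    ContDiff ℝ n (∇ u) :=
  (InnerProductSpace.toDual ℝ E).symm.contDiff.comp (hu.fderiv_right le_rfl)

lemma gradient_eq_zero_of_notMem_tsupport {u : E → ℝ} {x : E} (hx : x ∉ tsupport u) :
    ∇ u x = 0 := by
  rw [gradient, image_eq_zero_of_notMem_tsupport fun h => hx (tsupport_fderiv_subset ℝ h),
    map_zero]

lemma fderiv_sq_mul_comp_apply {η g : E → ℝ} {H : ℝ → ℝ} {x : E} (hη : DifferentiableAt ℝ η x)
    (hg : DifferentiableAt ℝ g x) (hH : DifferentiableAt ℝ H (g x)) (v : E) :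
    fderiv ℝ (fun y => η y ^ 2 * H (g y)) x v =
      η x ^ 2 * (deriv H (g x) * ⟪∇ g x, v⟫) + 2 * (η x * H (g x) * ⟪∇ η x, v⟫) := by
  have h : HasFDerivAt (fun y => η y ^ 2 * H (g y)) _ x :=
    (hη.hasFDerivAt.pow 2).mul (hH.hasDerivAt.comp_hasFDerivAt x hg.hasFDerivAt)
  rw [h.fderiv]
  simp only [Nat.add_one_sub_one, pow_one, nsmul_eq_mul, Nat.cast_ofNat, add_apply, smul_apply,
    smul_eq_mul, inner_gradient_left]
  ring

lemma sq_mul_inner_gradient_le_fderiv {T : E →L[ℝ] E} (hT : T.IsPositive) {η g : E → ℝ}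
    {H : ℝ → ℝ} {x : E} (hη : DifferentiableAt ℝ η x) (hg : DifferentiableAt ℝ g x)
    (hH : 0 < deriv H (g x)) :
    η x ^ 2 * (deriv H (g x) * ⟪T (∇ g x), ∇ g x⟫) ≤
      2 * fderiv ℝ (fun y => η y ^ 2 * H (g y)) x (T (∇ g x)) +
        4 * (H (g x) ^ 2 / deriv H (g x) * ⟪T (∇ η x), ∇ η x⟫) := by
  have hyoung := neg_two_mul_inner_le_of_isPositive hT (half_pos hH)
    (η x • ∇ g x) (H (g x) • ∇ η x)
  simp only [map_smul, real_inner_smul_left, real_inner_smul_right] at hyoung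
  rw [fderiv_sq_mul_comp_apply hη hg (differentiableAt_of_deriv_ne_zero hH.ne'),
    real_inner_comm (T _) (∇ g x), real_inner_comm (T _) (∇ η x)]
  have hinv : H (g x) ^ 2 / deriv H (g x) = (deriv H (g x) / 2)⁻¹ * H (g x) ^ 2 / 2 := by
    field_simp
  rw [hinv]
  linarith

variable [MeasurableSpace E] [BorelSpace E] {μ : Measure E}

lemma integral_sq_mul_inner_gradient_le [IsFiniteMeasureOnCompacts μ] {A : E → E →L[ℝ] E}
    (hA : Continuous A) (hpos : ∀ x, (A x).IsPositive) {g : E → ℝ} (hg : ContDiff ℝ 1 g)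
    (hdiv : IsWeaklyDivergenceFree μ fun x => A x (∇ g x)) {H : ℝ → ℝ} (hH : ContDiff ℝ 1 H)
    (hH' : ∀ t, 0 < deriv H t) {η : E → ℝ} (hη : ContDiff ℝ 1 η) (hηc : HasCompactSupport η) :
    ∫ x, η x ^ 2 * (deriv H (g x) * ⟪A x (∇ g x), ∇ g x⟫) ∂μ ≤
      4 * ∫ x, H (g x) ^ 2 / deriv H (g x) * ⟪A x (∇ η x), ∇ η x⟫ ∂μ := by
  have hgradient {v : E → ℝ} (hv : ContDiff ℝ 1 v) : Continuous (∇ v) :=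
    (contDiff_gradient (n := 0) hv).continuous
  have hflux := hA.clm_apply (hgradient hg)
  have hderiv : Continuous fun x => deriv H (g x) :=
    (hH.continuous_deriv le_rfl).comp hg.continuous
  have hHg : ContDiff ℝ 1 fun x => H (g x) := hH.comp hg
  have hφ : ContDiff ℝ 1 fun x => η x ^ 2 * H (g x) := (hη.pow 2).mul hHg
  have hφc : HasCompactSupport fun x => η x ^ 2 * H (g x) :=
    hηc.mono fun x hx h => hx (by simp [h])
  have hleft : Integrable (fun x => η x ^ 2 * (deriv H (g x) * ⟪A x (∇ g x), ∇ g x⟫)) μ :=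
    ((hη.continuous.pow 2).mul (hderiv.mul
      (hflux.inner (hgradient hg)))).integrable_of_hasCompactSupport
        (hηc.mono fun x hx h => hx (by simp [h]))
  have htest : Integrable (fun x =>
      fderiv ℝ (fun y => η y ^ 2 * H (g y)) x (A x (∇ g x))) μ :=
    ((hφ.continuous_fderiv one_ne_zero).clm_apply hflux).integrable_of_hasCompactSupport
      ((hφc.fderiv ℝ).mono fun x hx h => hx (by simp [h]))
  have hright : Integrable (fun x =>
      H (g x) ^ 2 / deriv H (g x) * ⟪A x (∇ η x), ∇ η x⟫) μ :=
    (((hHg.continuous.pow 2).div hderiv fun x => (hH' _).ne').mul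
      ((hA.clm_apply (hgradient hη)).inner (hgradient hη))).integrable_of_hasCompactSupport
        (HasCompactSupport.intro hηc fun x hx => by
          simp [gradient_eq_zero_of_notMem_tsupport hx])
  have hmono := integral_mono hleft ((htest.const_mul 2).add (hright.const_mul 4)) fun x =>
    sq_mul_inner_gradient_le_fderiv (hpos x) (hη.differentiable one_ne_zero x)
      (hg.differentiable one_ne_zero x) (hH' (g x))
  simpa only [Pi.add_apply, integral_add (htest.const_mul 2) (hright.const_mul 4),
    integral_const_mul, hdiv _ hφ hφc, mul_zero, zero_add] using hmono

lemma inner_gradient_eq_zero_of_isWeaklyDivergenceFree [FiniteDimensional ℝ E]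
    (hE : finrank ℝ E ≤ 2) [μ.IsAddHaarMeasure] {A : E → E →L[ℝ] E} (hA : Continuous A)
    (hpos : ∀ x, (A x).IsPositive) {g : E → ℝ} (hg : ContDiff ℝ 1 g)
    (hdiv : IsWeaklyDivergenceFree μ fun x => A x (∇ g x)) {H : ℝ → ℝ} (hH : ContDiff ℝ 1 H)
    (hH' : ∀ t, 0 < deriv H t) {C : ℝ} (hC : 0 ≤ C)
    (hbound : ∀ x w, H (g x) ^ 2 / deriv H (g x) * ⟪A x w, w⟫ ≤ C * ‖w‖ ^ 2) (x : E) :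
    ⟪A x (∇ g x), ∇ g x⟫ = 0 := by
  have hgg : Continuous (∇ g) := (contDiff_gradient (n := 0) hg).continuous
  have hzero := eq_zero_of_forall_integral_sq_mul_le_dirichlet (μ := μ) hE
    (Q := fun x => deriv H (g x) * ⟪A x (∇ g x), ∇ g x⟫)
    (((hH.continuous_deriv le_rfl).comp hg.continuous).mul ((hA.clm_apply hgg).inner hgg))
    (fun x => mul_nonneg (hH' _).le ((hpos x).inner_nonneg_left _))
    (C := 4 * C) (by positivity) (fun η hη hηc => ?_) x
  · exact (mul_eq_zero.1 hzero).resolve_left (hH' _).ne'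
  · refine (integral_sq_mul_inner_gradient_le hA hpos hg hdiv hH hH' hη hηc).trans ?_
    rw [mul_assoc, ← integral_const_mul C]
    refine mul_le_mul_of_nonneg_left (integral_mono_of_nonneg (.of_forall fun x => ?_)
      ((integrable_norm_fderiv_sq hη hηc).const_mul C) (.of_forall fun x => ?_)) (by norm_num)
    · exact mul_nonneg (div_nonneg (sq_nonneg _) (hH' _).le) ((hpos x).inner_nonneg_left _)
    · simpa only [norm_gradient] using hbound x (∇ η x)

end Caccioppoli

section Growth

/-- A smooth odd function growing like `|t| ^ (2 * β - 1)`. Used as a nonlinearity in the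
Caccioppoli inequality, it costs the weight `(1 + t ^ 2) ^ β` on the gradient of the cutoff. -/
def oddPow (β t : ℝ) : ℝ := t * (1 + t ^ 2) ^ (β - 1)

lemma contDiff_oddPow (β : ℝ) : ContDiff ℝ 1 (oddPow β) :=
  contDiff_id.mul ((contDiff_const.add (contDiff_id.pow 2)).rpow_const_of_ne fun t =>
    (by positivity : (1 : ℝ) + t ^ 2 ≠ 0))

lemma deriv_oddPow (β t : ℝ) :
    deriv (oddPow β) t = (1 + (2 * β - 1) * t ^ 2) * (1 + t ^ 2) ^ (β - 2) := by
  have hΓ : 0 < 1 + t ^ 2 := by positivity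
  have hΓ' : HasDerivAt (fun t : ℝ => 1 + t ^ 2) (2 * t) t := by
    simpa using (hasDerivAt_pow 2 t).const_add 1
  have hsplit : (1 + t ^ 2) ^ (β - 1) = (1 + t ^ 2) ^ (β - 2) * (1 + t ^ 2) := by
    rw [← Real.rpow_add_one hΓ.ne']
    ring_nf
  refine (((hasDerivAt_id t).mul (hΓ'.rpow_const (Or.inl hΓ.ne'))).congr_deriv ?_).deriv
  rw [hsplit, show β - 1 - 1 = β - 2 by ring]
  simp only [id]
  ring

lemma deriv_oddPow_pos {β : ℝ} (hβ : 1 / 2 < β) (t : ℝ) : 0 < deriv (oddPow β) t := by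
  have hβ' : 0 < 2 * β - 1 := by linarith
  rw [deriv_oddPow]
  positivity

lemma oddPow_sq_div_deriv_le {β : ℝ} (hβ : 1 / 2 < β) (t : ℝ) :
    oddPow β t ^ 2 / deriv (oddPow β) t ≤ (2 * β - 1)⁻¹ * (1 + t ^ 2) ^ β := by
  have hβ' : 0 < 2 * β - 1 := by linarith
  have hΓ : 0 < 1 + t ^ 2 := by positivity
  have hsq : oddPow β t ^ 2 = t ^ 2 * ((1 + t ^ 2) ^ β * (1 + t ^ 2) ^ (β - 2)) := by
    rw [oddPow, mul_pow, sq ((1 + t ^ 2) ^ _), ← Real.rpow_add hΓ, ← Real.rpow_add hΓ]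
    ring_nf
  rw [div_le_iff₀ (deriv_oddPow_pos hβ t), hsq, deriv_oddPow, inv_mul_eq_div,
    div_mul_eq_mul_div, le_div_iff₀ hβ']
  have hpos : 0 < (1 + t ^ 2) ^ β * (1 + t ^ 2) ^ (β - 2) := by positivity
  nlinarith

lemma one_add_sq_rpow_le {m K β P t : ℝ} (hm : 0 ≤ m) (hK : 0 ≤ K) (hβ : 0 ≤ β) (hP : 0 ≤ P)
    (ht : |t| ≤ K * (P ^ m + 1)) :
    (1 + t ^ 2) ^ β ≤ (1 + 4 * K ^ 2) ^ β * (1 + P) ^ (2 * m * β) := by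
  have hX : 1 ≤ 1 + P := by linarith
  have hXm : 1 ≤ (1 + P) ^ m := Real.one_le_rpow hX hm
  have hPm : P ^ m ≤ (1 + P) ^ m := Real.rpow_le_rpow hP (by linarith) hm
  have htX : |t| ≤ 2 * K * (1 + P) ^ m := ht.trans (by nlinarith)
  have hsq : t ^ 2 ≤ (2 * K * (1 + P) ^ m) ^ 2 := sq_le_sq' (abs_le.1 htX).1 (abs_le.1 htX).2
  have hXsq : ((1 + P) ^ m) ^ 2 = (1 + P) ^ (2 * m) := by
    rw [mul_comm 2 m, Real.rpow_mul (by linarith), Real.rpow_two]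
  have hbase : 1 + t ^ 2 ≤ (1 + 4 * K ^ 2) * (1 + P) ^ (2 * m) := by
    rw [← hXsq]
    nlinarith
  calc (1 + t ^ 2) ^ β ≤ ((1 + 4 * K ^ 2) * (1 + P) ^ (2 * m)) ^ β :=
        Real.rpow_le_rpow (by positivity) hbase hβ
    _ = (1 + 4 * K ^ 2) ^ β * (1 + P) ^ (2 * m * β) := by
        rw [Real.mul_rpow (by positivity) (by positivity), ← Real.rpow_mul (by linarith)]

lemma log_two_add_div_le {s P : ℝ} (hs : s < 1) (hP : 0 ≤ P) :
    Real.log (2 + P) / (1 + P) ≤ 2 ^ (1 - s) / (1 - s) * (1 + P) ^ (-s) := by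
  have hX : 0 < 1 + P := by linarith
  have hlog : Real.log (2 + P) ≤ (2 * (1 + P)) ^ (1 - s) / (1 - s) :=
    (Real.log_le_log (by linarith) (by linarith)).trans
      (Real.log_le_rpow_div (by positivity) (by linarith))
  rw [div_le_iff₀ hX]
  refine hlog.trans_eq ?_
  rw [Real.mul_rpow zero_le_two hX.le, mul_assoc, ← Real.rpow_add_one hX.ne', neg_add_eq_sub]
  ring

lemma exists_log_two_add_div_mul_rpow_le {m K β : ℝ} (hm : 0 ≤ m) (hK : 0 ≤ K) (hβ : 0 ≤ β)
    (hmβ : 2 * m * β < 1) :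
    ∃ C, 0 ≤ C ∧ ∀ P t : ℝ, 0 ≤ P → |t| ≤ K * (P ^ m + 1) →
      Real.log (2 + P) / (1 + P) * (1 + t ^ 2) ^ β ≤ C := by
  set s := 2 * m * β
  have : 0 < 1 - s := by linarith
  refine ⟨2 ^ (1 - s) / (1 - s) * (1 + 4 * K ^ 2) ^ β, by positivity, fun P t hP ht => ?_⟩
  have hcancel : (1 + P) ^ (-s) * (1 + P) ^ s = 1 := by
    rw [← Real.rpow_add (by linarith), neg_add_cancel, Real.rpow_zero]
  calc Real.log (2 + P) / (1 + P) * (1 + t ^ 2) ^ β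
      ≤ 2 ^ (1 - s) / (1 - s) * (1 + P) ^ (-s) * ((1 + 4 * K ^ 2) ^ β * (1 + P) ^ s) := by
        gcongr
        · exact log_two_add_div_le hmβ hP
        · exact one_add_sq_rpow_le hm hK hβ hP ht
    _ = 2 ^ (1 - s) / (1 - s) * (1 + 4 * K ^ 2) ^ β * ((1 + P) ^ (-s) * (1 + P) ^ s) := by ring
    _ = 2 ^ (1 - s) / (1 - s) * (1 + 4 * K ^ 2) ^ β := by rw [hcancel, mul_one]

lemma exists_oddPow_sq_div_deriv_mul_log_le {m K β : ℝ} (hm : 0 ≤ m) (hK : 0 ≤ K)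
    (hβ : 1 / 2 < β) (hmβ : 2 * m * β < 1) :
    ∃ C, 0 ≤ C ∧ ∀ P t : ℝ, 0 ≤ P → |t| ≤ K * (P ^ m + 1) →
      oddPow β t ^ 2 / deriv (oddPow β) t * (Real.log (2 + P) / (1 + P)) ≤ C := by
  obtain ⟨C, hC, hweight⟩ :=
    exists_log_two_add_div_mul_rpow_le hm hK (by linarith : 0 ≤ β) hmβ
  have hβ' : 0 < 2 * β - 1 := by linarith
  refine ⟨(2 * β - 1)⁻¹ * C, by positivity, fun P t hP ht => ?_⟩
  have hlog : 0 ≤ Real.log (2 + P) / (1 + P) :=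
    div_nonneg (Real.log_nonneg (by linarith)) (by linarith)
  calc oddPow β t ^ 2 / deriv (oddPow β) t * (Real.log (2 + P) / (1 + P))
      ≤ (2 * β - 1)⁻¹ * (1 + t ^ 2) ^ β * (Real.log (2 + P) / (1 + P)) :=
        mul_le_mul_of_nonneg_right (oddPow_sq_div_deriv_le hβ t) hlog
    _ = (2 * β - 1)⁻¹ * (Real.log (2 + P) / (1 + P) * (1 + t ^ 2) ^ β) := by ring
    _ ≤ (2 * β - 1)⁻¹ * C := by gcongr; exact hweight P t hP ht

end Growth

section Hessian

lemma iteratedFDeriv_two_comm {E : Type*} [NormedAddCommGroup E] [NormedSpace ℝ E] {f : E → ℝ}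
    (hf : ContDiff ℝ 2 f) (p v w : E) :
    iteratedFDeriv ℝ 2 f p ![v, w] = iteratedFDeriv ℝ 2 f p ![w, v] := by
  simpa [iteratedFDeriv_two_apply] using (hf.contDiffAt.isSymmSndFDerivAt (by simp)).eq v w

variable {E : Type*} [NormedAddCommGroup E] [InnerProductSpace ℝ E] [CompleteSpace E]

lemma inner_fderiv_gradient {f : E → ℝ} (hf : ContDiff ℝ 2 f) (p v w : E) :
    ⟪fderiv ℝ (∇ f) p v, w⟫ = iteratedFDeriv ℝ 2 f p ![v, w] := by
  have hd : DifferentiableAt ℝ (fderiv ℝ f) p :=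
    (hf.fderiv_right (m := 1) le_rfl).differentiable one_ne_zero p
  have h : HasFDerivAt (∇ f) _ p := (InnerProductSpace.toDual ℝ E).symm.toContinuousLinearEquiv
    |>.toContinuousLinearMap.hasFDerivAt.comp p hd.hasFDerivAt
  rw [h.fderiv, iteratedFDeriv_two_apply]
  exact InnerProductSpace.toDual_symm_apply

lemma isPositive_fderiv_gradient {f : E → ℝ} (hf : ContDiff ℝ 2 f) {p : E}
    (hconvex : ∀ q, 0 ≤ iteratedFDeriv ℝ 2 f p ![q, q]) : (fderiv ℝ (∇ f) p).IsPositive := by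
  rw [ContinuousLinearMap.isPositive_iff]
  refine ⟨fun v w => ?_, fun q => (inner_fderiv_gradient hf p q q).symm ▸ hconvex q⟩
  rw [ContinuousLinearMap.coe_coe, inner_fderiv_gradient hf, real_inner_comm,
    inner_fderiv_gradient hf, iteratedFDeriv_two_comm hf]

lemma fderiv_gradient_apply {u : E → ℝ} (hu : ContDiff ℝ 2 u) (x e : E) :
    fderiv ℝ (∇ u) x e = ∇ (fun y => fderiv ℝ u y e) x := by
  have hd : DifferentiableAt ℝ (fderiv ℝ u) x :=
    (hu.fderiv_right (m := 1) le_rfl).differentiable one_ne_zero x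
  refine ext_inner_right ℝ fun w => ?_
  rw [inner_fderiv_gradient hu, iteratedFDeriv_two_comm hu, iteratedFDeriv_two_apply,
    inner_gradient_left, fderiv_clm_apply hd (differentiableAt_const e)]
  simp

lemma contDiff_gradient_comp_gradient {f u : E → ℝ} (hf : ContDiff ℝ 2 f)
    (hu : ContDiff ℝ 2 u) : ContDiff ℝ 1 fun x => ∇ f (∇ u x) :=
  (contDiff_gradient (n := 1) hf).comp (contDiff_gradient (n := 1) hu)

lemma fderiv_gradient_comp_gradient_apply {f u : E → ℝ} (hf : ContDiff ℝ 2 f)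
    (hu : ContDiff ℝ 2 u) (x e : E) :
    fderiv ℝ (fun y => ∇ f (∇ u y)) x e =
      fderiv ℝ (∇ f) (∇ u x) (∇ (fun y => fderiv ℝ u y e) x) := by
  have h : HasFDerivAt (fun y => ∇ f (∇ u y)) _ x :=
    ((contDiff_gradient (n := 1) hf).differentiable one_ne_zero _).hasFDerivAt.comp x
      ((contDiff_gradient (n := 1) hu).differentiable one_ne_zero x).hasFDerivAt
  rw [h.fderiv, ContinuousLinearMap.comp_apply, fderiv_gradient_apply hu]

end Hessian

theorem statement4_general {E : Type*} [NormedAddCommGroup E] [InnerProductSpace ℝ E]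
    [FiniteDimensional ℝ E] (hE : finrank ℝ E ≤ 2) {f u : E → ℝ} (hf : ContDiff ℝ 2 f)
    (hconvex : ∀ p q, 0 ≤ iteratedFDeriv ℝ 2 f p ![q, q]) {lam : ℝ} (hlam : 0 ≤ lam)
    (hgrow : ∀ p q : E, iteratedFDeriv ℝ 2 f p ![q, q] ≤
      lam * (Real.log (2 + ‖p‖) / (1 + ‖p‖)) * ‖q‖ ^ 2)
    (hu : ContDiff ℝ 2 u) (heq : ∀ x, divergence (fun y => ∇ f (∇ u y)) x = 0)
    {m K : ℝ} (hm0 : 0 ≤ m) (hm1 : m < 1) (hK : 0 ≤ K) {e : E}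
    (hbd : ∀ x, |fderiv ℝ u x e| ≤ K * (‖∇ u x‖ ^ m + 1)) (x : E) :
    iteratedFDeriv ℝ 2 f (∇ u x)
      ![∇ (fun y => fderiv ℝ u y e) x, ∇ (fun y => fderiv ℝ u y e) x] = 0 := by
  borelize E
  have hβ : 1 / 2 < (1 + m)⁻¹ := by
    rw [one_div]
    gcongr
    linarith
  have hmβ : 2 * m * (1 + m)⁻¹ < 1 := by
    rw [← div_eq_mul_inv, div_lt_one (by linarith)]
    linarith
  obtain ⟨C, hC, hweight⟩ := exists_oddPow_sq_div_deriv_mul_log_le hm0 hK hβ hmβ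
  have hdiv : IsWeaklyDivergenceFree volume fun x =>
      fderiv ℝ (∇ f) (∇ u x) (∇ (fun y => fderiv ℝ u y e) x) := by
    simpa only [fderiv_gradient_comp_gradient_apply hf hu] using
      (isWeaklyDivergenceFree_of_divergence_eq_zero (contDiff_gradient_comp_gradient hf hu)
        heq).fderiv_apply (contDiff_gradient_comp_gradient hf hu) e
  have hbound (x w : E) : oddPow (1 + m)⁻¹ (fderiv ℝ u x e) ^ 2 /
        deriv (oddPow (1 + m)⁻¹) (fderiv ℝ u x e) * ⟪fderiv ℝ (∇ f) (∇ u x) w, w⟫ ≤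
      lam * C * ‖w‖ ^ 2 := by
    rw [inner_fderiv_gradient hf]
    refine (mul_le_mul_of_nonneg_left (hgrow (∇ u x) w)
      (div_nonneg (sq_nonneg _) (deriv_oddPow_pos hβ _).le)).trans ?_
    rw [← mul_assoc, mul_left_comm]
    gcongr
    exact hweight _ _ (norm_nonneg _) (hbd x)
  rw [← inner_fderiv_gradient hf]
  exact inner_gradient_eq_zero_of_isWeaklyDivergenceFree hE
    (((contDiff_gradient (n := 1) hf).continuous_fderiv one_ne_zero).comp
      (contDiff_gradient (n := 1) hu).continuous)
    (fun x => isPositive_fderiv_gradient hf (hconvex (∇ u x)))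
    ((hu.fderiv_right (m := 1) le_rfl).clm_apply contDiff_const) hdiv (contDiff_oddPow _)
    (deriv_oddPow_pos hβ) (mul_nonneg hlam hC) hbound x

lemma divergence_eq_zero_of_solves {f u : E2 → ℝ} (hf : ContDiff ℝ 2 f) (hu : ContDiff ℝ 2 u)
    (heq : solves f u) (x : E2) : divergence (fun y => ∇ f (∇ u y)) x = 0 := by
  have hcoord (p : E2) (i : Fin 2) : fderiv ℝ f p (ee i) = EuclideanSpace.proj i (∇ f p) := by
    rw [← inner_gradient_left, ee, EuclideanSpace.inner_single_right]
    simp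
  have hderiv (i : Fin 2) : fderiv ℝ (fun y => fderiv ℝ f (∇ u y) (ee i)) x (ee i) =
      fderiv ℝ (fun y => ∇ f (∇ u y)) x (ee i) i := by
    have h : HasFDerivAt (fun y => EuclideanSpace.proj i (∇ f (∇ u y))) _ x :=
      (EuclideanSpace.proj (𝕜 := ℝ) i).hasFDerivAt.comp x
        ((contDiff_gradient_comp_gradient hf hu).differentiable one_ne_zero x).hasFDerivAt
    simp only [hcoord]
    rw [h.fderiv]
    rfl
  rw [divergence_eq_sum_coord (EuclideanSpace.basisFun (Fin 2) ℝ).toBasis, ← heq x]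
  simp only [hderiv]
  simp [ee]

lemma hess_nonneg {f : E2 → ℝ} (hpos : ∀ p q : E2, q ≠ 0 → 0 < Hess f p q) (p q : E2) :
    0 ≤ Hess f p q := by
  rcases eq_or_ne q 0 with rfl | hq
  · simp [Hess, iteratedFDeriv_two_apply]
  · exact (hpos p q hq).le

lemma abs_pd_le_norm_gradient (u : E2 → ℝ) (i : Fin 2) (x : E2) : |pd u i x| ≤ ‖∇ u x‖ := by
  simpa [pd, ee, norm_gradient] using (fderiv ℝ u x).le_opNorm (ee i)

theorem statement4 (f u : E2 → ℝ)
    (hf : ContDiff ℝ 2 f)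
    (hpos : ∀ p q : E2, q ≠ 0 → 0 < Hess f p q)
    (lam : ℝ) (hlam : 0 < lam)
    (hgrow : ∀ p q : E2, Hess f p q ≤ lam * (Real.log (2 + ‖p‖) / (1 + ‖p‖)) * ‖q‖ ^ 2)
    (hu : ContDiff ℝ 2 u) (heq : solves f u)
    (m K : ℝ) (hm0 : 0 ≤ m) (hm1 : m < 1) (hK : 0 < K)
    (hbd : ∀ x : E2, |pd u 0 x| ≤ K * (|pd u 1 x| ^ m + 1)) :
    ∀ α : ℝ, -1/2 < α → 2 * m * (1 + α) - 1 < 0 →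
      ∫⁻ x : E2, ENNReal.ofReal
        (Hess f (gradient u x) (gradient (pd u 0) x) * (1 + (pd u 0 x) ^ 2) ^ α) < ⊤ := by
  intro α _ _
  have hbd' (x : E2) : |fderiv ℝ u x (ee 0)| ≤ K * (‖∇ u x‖ ^ m + 1) :=
    (hbd x).trans (by gcongr; exact abs_pd_le_norm_gradient u 1 x)
  have hzero (x : E2) : Hess f (∇ u x) (∇ (pd u 0) x) = 0 :=
    statement4_general (by simp) hf (hess_nonneg hpos) hlam.le hgrow hu
      (divergence_eq_zero_of_solves hf hu heq) hm0 hm1 hK.le hbd' x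
  simp [hzero]
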